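/- Let k ≥ 1 and 0 ≤ j ≤ q_{k−1} − 1, set n = q_k + j with n ≥ 2, and let D = β_k q_{k+1} + (1 − β_k) q_k. Then every factor w of v₀ of length n has a well-defined frequency lim_{N→∞} (1/N)·#{1 ≤ m ≤ N : (v₀(m), …, v₀(m+n−1)) = w}, which equals (β_k(a_{k+1}+1) + (1−β_k))/D for the q_{k−1} − 1 − j factors occurring in the prefix (v₀(1), …, v₀(q_k + q_{k−1} − 2)), equals (β_k a_{k+1} + (1−β_k))/D for exactly q_k − q_{k−1} + 1 + j factors, and equals β_k/D for exactly j + 1 factors. -/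

import Mathlib

open scoped Classical

noncomputable section

/-- The Gauss map. -/
def gaussMap (x : ℝ) : ℝ := Int.fract x⁻¹

/-- `pq α k` is the partial quotient `a_{k+1}` of the continued fraction of `α`. -/
def pq (α : ℝ) (k : ℕ) : ℕ := ⌊(gaussMap^[k] α)⁻¹⌋₊

/-- `qd α (n+1)` is the convergent denominator `q_n`; `qd α 0 = q_{-1} = 0`, `qd α 1 = q₀ = 1`. -/
def qd (α : ℝ) : ℕ → ℕ
  | 0 => 0
  | 1 => 1
  | (n+2) => pq α n * qd α (n+1) + qd α n

/-- The circle map sequence of rotation number `α` (value `true` means letter `1`). -/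
def v0 (α : ℝ) (n : ℤ) : Bool := decide (1 - α ≤ Int.fract ((n : ℝ) * α))

/-- The word `(v₀(m+1), …, v₀(m+n))`. -/
def word (α : ℝ) (m n : ℕ) : List Bool :=
  (List.range n).map (fun i => v0 α ((m : ℤ) + 1 + i))

/-- `w` is a factor (admissible word) of `v₀`. -/
def IsFactor (α : ℝ) (w : List Bool) : Prop := ∃ m : ℕ, w = word α m w.length

/-- `w` occurs as a subword of the prefix `(v₀(1), …, v₀(N))`. -/
def OccursIn (α : ℝ) (w : List Bool) (N : ℕ) : Prop :=
  ∃ m : ℕ, m + w.length ≤ N ∧ w = word α m w.length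

/-- `exhaust α n` is `f(n)`: the least `N` such that every factor of length `n`
occurs in `(v₀(1), …, v₀(N))`. -/
def exhaust (α : ℝ) (n : ℕ) : ℕ :=
  sInf {N | ∀ w : List Bool, w.length = n → IsFactor α w → OccursIn α w N}

/-- number of occurrences of `w` in the prefix `(v₀(1), …, v₀(N))`. -/
def occCount (α : ℝ) (w : List Bool) (N : ℕ) : ℕ :=
  ((Finset.range N).filter (fun m => m + w.length ≤ N ∧ word α m w.length = w)).card

/-- the word `(v(m), v(m+1), …, v(m+n-1))` of a two-sided sequence. -/
def wordAt (v : ℤ → Bool) (m : ℤ) (n : ℕ) : List Bool :=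
  (List.range n).map (fun i => v (m + i))

/-- the hull `Ω`: closure of the set of translates of `v₀`. -/
def hull (α : ℝ) : Set (ℤ → Bool) :=
  closure {u | ∃ m : ℤ, u = fun n => v0 α (n - m)}


/-- `v₀` has frequency `L` of the word `w`: the proportion of positions `1 ≤ m ≤ N` with
`(v₀(m), …, v₀(m + |w| - 1)) = w` tends to `L`. -/
def HasFreq0 (α : ℝ) (w : List Bool) (L : ℝ) : Prop :=
  Filter.Tendsto
    (fun N : ℕ =>
      (((Finset.Icc 1 N).filter
          (fun m : ℕ => wordAt (v0 α) (m : ℤ) w.length = w)).card : ℝ) / N)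
    Filter.atTop (nhds L)

/-! ### Words of the circle map sequence and floors -/

lemma floor_succ_mul {α : ℝ} (h0 : 0 < α) (h1 : α < 1) (m : ℤ) :
    ⌊((m + 1 : ℤ) : ℝ) * α⌋ = ⌊(m : ℝ) * α⌋ + if v0 α m then 1 else 0 := by
  have e := Int.floor_add_fract ((m : ℝ) * α)
  have f0 := Int.fract_nonneg ((m : ℝ) * α)
  have f1 := Int.fract_lt_one ((m : ℝ) * α)
  rw [Int.floor_eq_iff]
  push_cast
  by_cases h : 1 - α ≤ Int.fract ((m : ℝ) * α)
  · simp only [v0, h, decide_true, if_true]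
    constructor <;> linarith
  · simp only [v0, h, decide_false, Bool.false_eq_true, if_false]
    push Not at h
    constructor <;> linarith

lemma wordAt_eq_iff_v0 (v : ℤ → Bool) (m m' : ℤ) (n : ℕ) :
    wordAt v m n = wordAt v m' n ↔ ∀ i < n, v (m + i) = v (m' + i) := by
  simp [wordAt, List.map_inj_left]
  exact ⟨fun h i hi => h i i hi rfl, by rintro h _ i hi rfl; exact h i hi⟩

lemma wordAt_eq_iff_floor {α : ℝ} (h0 : 0 < α) (h1 : α < 1) (m m' : ℤ) (n : ℕ) :
    wordAt (v0 α) m n = wordAt (v0 α) m' n ↔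
      ∀ i : ℕ, i ≤ n → ⌊((m + i : ℤ) : ℝ) * α⌋ - ⌊(m : ℝ) * α⌋ =
        ⌊((m' + i : ℤ) : ℝ) * α⌋ - ⌊(m' : ℝ) * α⌋ := by
  have step (x : ℤ) (i : ℕ) : ⌊((x + (i + 1 : ℕ) : ℤ) : ℝ) * α⌋ =
      ⌊((x + i : ℤ) : ℝ) * α⌋ + if v0 α (x + i) then 1 else 0 := by
    rw [← floor_succ_mul h0 h1]
    push_cast
    ring_nf
  rw [wordAt_eq_iff_v0]
  constructor
  · intro h i
    induction i with
    | zero => simp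
    | succ i ih =>
      intro hi
      have := ih (by omega)
      rw [step, step, h i (by omega)]
      omega
  · intro h i hi
    have e1 := h i hi.le
    have e2 := h (i + 1) hi
    rw [step, step] at e2
    cases hv : v0 α (m + i) <;> cases hv' : v0 α (m' + i) <;> simp_all
    omega

lemma wordAt_eq_wordAt_neg_iff {α : ℝ} (h0 : 0 < α) (h1 : α < 1) (m : ℤ) {n c : ℕ} (hc : c ≤ n) :
    wordAt (v0 α) m n = wordAt (v0 α) (-c) n ↔
      ∀ i : ℕ, i ≤ n →
        Int.fract (((m + c : ℤ) : ℝ) * α) + Int.fract (((i - c : ℤ) : ℝ) * α) < 1 := by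
  rw [wordAt_eq_iff_floor h0 h1]
  have key (i : ℕ) : ⌊((m + i : ℤ) : ℝ) * α⌋ = ⌊((m + c : ℤ) : ℝ) * α⌋ + ⌊((i - c : ℤ) : ℝ) * α⌋ +
      ⌊Int.fract (((m + c : ℤ) : ℝ) * α) + Int.fract (((i - c : ℤ) : ℝ) * α)⌋ := by
    have : ((m + i : ℤ) : ℝ) * α = Int.fract (((m + c : ℤ) : ℝ) * α) +
        Int.fract (((i - c : ℤ) : ℝ) * α) + (⌊((m + c : ℤ) : ℝ) * α⌋ : ℤ) +
          (⌊((i - c : ℤ) : ℝ) * α⌋ : ℤ) := by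
      have e1 := Int.floor_add_fract (((m + c : ℤ) : ℝ) * α)
      have e2 := Int.floor_add_fract (((i - c : ℤ) : ℝ) * α)
      push_cast at e1 e2 ⊢
      linarith
    rw [this, Int.floor_add_intCast, Int.floor_add_intCast]
    ring
  have nonneg (i : ℕ) :
      0 ≤ Int.fract (((m + c : ℤ) : ℝ) * α) + Int.fract (((i - c : ℤ) : ℝ) * α) :=
    add_nonneg (Int.fract_nonneg _) (Int.fract_nonneg _)
  have comm (i : ℕ) : (-(c : ℤ) + i) = i - c := by ring
  simp only [comm]
  constructor
  · intro h i hi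
    have e1 := h i hi
    have e2 := h c hc
    rw [key i] at e1
    have z : ⌊((c - c : ℤ) : ℝ) * α⌋ = 0 := by simp
    rw [z] at e2
    have : ⌊Int.fract (((m + c : ℤ) : ℝ) * α) + Int.fract (((i - c : ℤ) : ℝ) * α)⌋ = 0 := by
      omega
    exact (Int.floor_eq_zero_iff.1 this).2
  · intro h i hi
    have z (i : ℕ) (hi : i ≤ n) :
        ⌊Int.fract (((m + c : ℤ) : ℝ) * α) + Int.fract (((i - c : ℤ) : ℝ) * α)⌋ = 0 :=
      Int.floor_eq_zero_iff.2 ⟨nonneg i, h i hi⟩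
    have e1 := key i
    have e2 := key 0
    rw [z i hi] at e1
    rw [z 0 (Nat.zero_le n)] at e2
    simp only [Nat.cast_zero, add_zero, zero_sub] at e2
    omega

lemma fract_neg_intCast_mul {α : ℝ} (hirr : Irrational α) {d : ℤ} (hd : d ≠ 0) :
    Int.fract (((-d : ℤ) : ℝ) * α) = 1 - Int.fract ((d : ℝ) * α) := by
  have h : Int.fract ((d : ℝ) * α) ≠ 0 := by
    intro h
    have := (hirr.intCast_mul hd).ne_int ⌊(d : ℝ) * α⌋
    have e := Int.floor_add_fract ((d : ℝ) * α)
    rw [h, add_zero] at e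
    exact this e.symm
  rw [Int.cast_neg, neg_mul, Int.fract_neg h]

/-- Every word of length `n` of the sequence is the word at one of the positions `-n, …, 0`. -/
lemma exists_wordAt_eq_neg {α : ℝ} (h0 : 0 < α) (h1 : α < 1) (m : ℤ) (n : ℕ) :
    ∃ c ≤ n, wordAt (v0 α) m n = wordAt (v0 α) (-(c : ℤ)) n := by
  obtain ⟨c, hc, hmin⟩ := Finset.exists_min_image (Finset.range (n + 1))
    (fun c : ℕ => Int.fract (((m + c : ℤ) : ℝ) * α)) ⟨0, by simp⟩
  have hc' : c ≤ n := by simpa [Nat.lt_succ_iff] using hc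
  refine ⟨c, hc', (wordAt_eq_wordAt_neg_iff h0 h1 m hc').2 fun i hi => ?_⟩
  by_contra! h
  have hi' := hmin i (by simpa [Nat.lt_succ_iff] using hi)
  have f1 := Int.fract_lt_one (((m + c : ℤ) : ℝ) * α)
  have f2 := Int.fract_lt_one (((i - c : ℤ) : ℝ) * α)
  have : Int.fract (((m + i : ℤ) : ℝ) * α) =
      Int.fract (((m + c : ℤ) : ℝ) * α) + Int.fract (((i - c : ℤ) : ℝ) * α) - 1 := by
    rw [Int.fract_eq_iff]
    refine ⟨by linarith, by linarith,
      ⌊((m + c : ℤ) : ℝ) * α⌋ + ⌊((i - c : ℤ) : ℝ) * α⌋ + 1, ?_⟩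
    have e1 := Int.floor_add_fract (((m + c : ℤ) : ℝ) * α)
    have e2 := Int.floor_add_fract (((i - c : ℤ) : ℝ) * α)
    push_cast at e1 e2 ⊢
    linarith
  linarith

/-! ### Frequencies of intervals with endpoints in the orbit -/

lemma abs_sum_shift_sub_le_natCast (f : ℤ → ℝ) (hf0 : ∀ x, 0 ≤ f x) (hf1 : ∀ x, f x ≤ 1)
    (x : ℤ) (d N : ℕ) :
    |∑ m ∈ Finset.Icc 1 N, (f (m + (x + d)) - f (m + x))| ≤ d := by
  induction d with
  | zero => simp
  | succ d ih =>
    have tele (N : ℕ) : ∑ m ∈ Finset.Icc 1 N, (f (m + (x + (d + 1 : ℕ))) - f (m + (x + d))) =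
        f (N + 1 + (x + d)) - f (1 + (x + d)) := by
      induction N with
      | zero => simp
      | succ N ihN =>
        rw [Finset.sum_Icc_succ_top (by omega), ihN]
        have : ((N + 1 : ℕ) : ℤ) + (x + (d + 1 : ℕ)) = (N + 1 : ℕ) + 1 + (x + d) := by
          push_cast
          ring
        rw [this]
        push_cast
        ring
    have split : ∑ m ∈ Finset.Icc 1 N, (f (m + (x + (d + 1 : ℕ))) - f (m + x)) =
        (f (N + 1 + (x + d)) - f (1 + (x + d))) +
          ∑ m ∈ Finset.Icc 1 N, (f (m + (x + d)) - f (m + x)) := by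
      rw [← tele N, ← Finset.sum_add_distrib]
      exact Finset.sum_congr rfl fun _ _ => by ring
    rw [split]
    have := hf0 (N + 1 + (x + d))
    have := hf1 (N + 1 + (x + d))
    have := hf0 (1 + (x + d))
    have := hf1 (1 + (x + d))
    push_cast
    rw [abs_le] at ih ⊢
    constructor <;> linarith [ih.1, ih.2]

lemma abs_sum_shift_sub_le (f : ℤ → ℝ) (hf0 : ∀ x, 0 ≤ f x) (hf1 : ∀ x, f x ≤ 1)
    (x y : ℤ) (N : ℕ) :
    |∑ m ∈ Finset.Icc 1 N, (f (m + x) - f (m + y))| ≤ |((x - y : ℤ) : ℝ)| := by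
  rcases le_total y x with h | h
  · obtain ⟨d, hd⟩ := Int.eq_ofNat_of_zero_le (sub_nonneg.2 h)
    obtain rfl : x = y + d := by omega
    simpa using abs_sum_shift_sub_le_natCast f hf0 hf1 y d N
  · obtain ⟨d, hd⟩ := Int.eq_ofNat_of_zero_le (sub_nonneg.2 h)
    obtain rfl : y = x + d := by omega
    rw [← abs_neg, ← Finset.sum_neg_distrib]
    simpa using abs_sum_shift_sub_le_natCast f hf0 hf1 x d N

lemma fract_sub_eq (x y : ℝ) : Int.fract (x - y) =
    Int.fract x - Int.fract y + if Int.fract x < Int.fract y then 1 else 0 := by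
  have ex := Int.floor_add_fract x
  have ey := Int.floor_add_fract y
  have x0 := Int.fract_nonneg x
  have x1 := Int.fract_lt_one x
  have y0 := Int.fract_nonneg y
  have y1 := Int.fract_lt_one y
  rw [Int.fract_eq_iff]
  split_ifs with h
  · refine ⟨by linarith, by linarith, ⌊x⌋ - ⌊y⌋ - 1, ?_⟩
    push_cast
    linarith
  · refine ⟨by linarith, by linarith, ⌊x⌋ - ⌊y⌋, ?_⟩
    push_cast
    linarith

lemma tendsto_card_fract_lt (α : ℝ) (c d : ℤ) :
    Filter.Tendsto (fun N : ℕ => (((Finset.Icc 1 N).filter (fun m : ℕ =>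
      Int.fract (((m + c : ℤ) : ℝ) * α) < Int.fract ((d : ℝ) * α))).card : ℝ) / N)
      Filter.atTop (nhds (Int.fract ((d : ℝ) * α))) := by
  set L := Int.fract ((d : ℝ) * α)
  have bound (N : ℕ) : |(((Finset.Icc 1 N).filter (fun m : ℕ =>
      Int.fract (((m + c : ℤ) : ℝ) * α) < L)).card : ℝ) - N * L| ≤ |(d : ℝ)| := by
    have h := abs_sum_shift_sub_le (fun x : ℤ => Int.fract ((x : ℝ) * α))
      (fun x => Int.fract_nonneg _) (fun x => (Int.fract_lt_one _).le) (c - d) c N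
    have e : ∑ m ∈ Finset.Icc 1 N, (Int.fract (((m + (c - d) : ℤ) : ℝ) * α) -
        Int.fract (((m + c : ℤ) : ℝ) * α)) = (((Finset.Icc 1 N).filter (fun m : ℕ =>
          Int.fract (((m + c : ℤ) : ℝ) * α) < L)).card : ℝ) - N * L := by
      rw [Finset.card_filter]
      push_cast
      have hN : (N : ℝ) * L = ∑ m ∈ Finset.Icc 1 N, L := by simp
      rw [hN, ← Finset.sum_sub_distrib]
      refine Finset.sum_congr rfl fun m _ => ?_
      have := fract_sub_eq (((m : ℝ) + c) * α) (d * α)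
      rw [show ((m : ℝ) + (c - d)) * α = (m + c) * α - d * α by ring, this]
      ring
    rw [← e]
    simpa using h
  rw [tendsto_iff_norm_sub_tendsto_zero]
  refine squeeze_zero' (Filter.Eventually.of_forall fun _ => norm_nonneg _) ?_
    (tendsto_const_div_atTop_nhds_zero_nat |(d : ℝ)|)
  filter_upwards [Filter.eventually_gt_atTop 0] with N hN
  have hN' : (0 : ℝ) < N := by exact_mod_cast hN
  rw [Real.norm_eq_abs, div_sub' hN'.ne', abs_div, abs_of_pos hN']
  exact div_le_div_of_nonneg_right (bound N) hN'.le

lemma HasFreq0.exists_wordAt_eq {α : ℝ} {w : List Bool} {L : ℝ} (h : HasFreq0 α w L)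
    (hL : 0 < L) : ∃ m : ℕ, 1 ≤ m ∧ wordAt (v0 α) m w.length = w := by
  by_contra! hw
  have hz : (fun N : ℕ => (((Finset.Icc 1 N).filter
      (fun m : ℕ => wordAt (v0 α) (m : ℤ) w.length = w)).card : ℝ) / N) = fun _ => 0 := by
    funext N
    rw [Finset.filter_false_of_mem fun m hm => hw m (Finset.mem_Icc.1 hm).1]
    simp
  unfold HasFreq0 at h
  rw [hz] at h
  exact hL.ne (tendsto_nhds_unique tendsto_const_nhds h)

/-! ### The gaps of the partition cut out by an orbit segment -/

/-- `(B, Q)` and `(A, P)` form a unimodular pair of approximations of `α`, the former from below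
with error `b = Bα - Q` and the latter from above with error `a = P - Aα`. -/
structure ApproxPair (α : ℝ) (A B : ℕ) (P Q : ℤ) (a b : ℝ) : Prop where
  a_pos : 0 < a
  b_pos : 0 < b
  mul_A : (A : ℝ) * α = P - a
  mul_B : (B : ℝ) * α = Q + b
  det : B * P - A * Q = 1

/-- The length of the gap to the right of the `c`-th point `-cα` among `0, -α, …, -nα`. -/
def gapLen (A B n : ℕ) (a b : ℝ) (c : ℕ) : ℝ :=
  if B ≤ c then b else if c + A ≤ n then a else a + b

namespace ApproxPair

variable {α a b : ℝ} {A B : ℕ} {P Q : ℤ}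

lemma mul_add_mul (h : ApproxPair α A B P Q a b) : A * b + B * a = 1 := by
  have d : (B : ℝ) * P - A * Q = 1 := by exact_mod_cast h.det
  have e1 := h.mul_A
  have e2 := h.mul_B
  linear_combination (-(A : ℝ)) * e2 + (B : ℝ) * e1 + d

lemma exists_coeffs (h : ApproxPair α A B P Q a b) {d : ℤ} (hd : |d| < A + B) :
    ∃ u v : ℤ, 0 ≤ u ∧ 0 ≤ v ∧ d = u * B - v * A ∧ Int.fract ((d : ℝ) * α) = u * b + v * a := by
  set e := ⌊(d : ℝ) * α⌋ with he
  obtain ⟨u, hu⟩ : ∃ u, u = d * P - e * A := ⟨_, rfl⟩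
  obtain ⟨v, hv⟩ : ∃ v, v = d * Q - e * B := ⟨_, rfl⟩
  have hd' : d = u * B - v * A := by
    subst hu hv
    linear_combination (-d) * h.det
  have he' : e = u * Q - v * P := by
    subst hu hv
    linear_combination (-e) * h.det
  have hf : Int.fract ((d : ℝ) * α) = u * b + v * a := by
    rw [Int.fract, ← he, he', hd']
    push_cast
    linear_combination (u : ℝ) * h.mul_B - v * h.mul_A
  have f0 := Int.fract_nonneg ((d : ℝ) * α)
  rw [hf] at f0
  have ha := h.a_pos
  have hb := h.b_pos
  rw [abs_lt] at hd
  refine ⟨u, v, ?_, ?_, hd', hf⟩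
  · by_contra! hu0
    have hv0 : 0 < v := by
      by_contra! hv0
      have : (u : ℝ) < 0 := by exact_mod_cast hu0
      have : (v : ℝ) ≤ 0 := by exact_mod_cast hv0
      nlinarith
    nlinarith
  · by_contra! hv0
    have hu0 : 0 < u := by
      by_contra! hu0
      have : (v : ℝ) < 0 := by exact_mod_cast hv0
      have : (u : ℝ) ≤ 0 := by exact_mod_cast hu0
      nlinarith
    nlinarith

lemma gapLen_pos (h : ApproxPair α A B P Q a b) (n c : ℕ) : 0 < gapLen A B n a b c := by
  have ha := h.a_pos
  have hb := h.b_pos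
  unfold gapLen
  split_ifs <;> linarith

lemma gapLen_le_fract (h : ApproxPair α A B P Q a b) {n c i : ℕ} (hn : n < A + B)
    (hc : c ≤ n) (hi : i ≤ n) (hci : i ≠ c) :
    gapLen A B n a b c ≤ Int.fract (((c - i : ℤ) : ℝ) * α) := by
  obtain ⟨u, v, hu, hv, hd, hf⟩ := h.exists_coeffs (d := (c - i : ℤ)) (by rw [abs_lt]; omega)
  rw [hf]
  have ha := h.a_pos
  have hb := h.b_pos
  have hur : (0 : ℝ) ≤ u := by exact_mod_cast hu
  have hvr : (0 : ℝ) ≤ v := by exact_mod_cast hv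
  unfold gapLen
  rcases hu.eq_or_lt with rfl | hu1
  · rcases hv.eq_or_lt with rfl | hv1
    · omega
    · have hv1r : (1 : ℝ) ≤ v := by exact_mod_cast hv1
      have : (A : ℤ) ≤ v * A := by nlinarith
      rw [if_neg (by omega), if_pos (by omega)]
      push_cast
      nlinarith
  · have hu1r : (1 : ℝ) ≤ u := by exact_mod_cast hu1
    rcases hv.eq_or_lt with rfl | hv1
    · have : (B : ℤ) ≤ u * B := by nlinarith
      rw [if_pos (by omega)]
      push_cast
      nlinarith
    · have hv1r : (1 : ℝ) ≤ v := by exact_mod_cast hv1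
      have : b ≤ u * b := by nlinarith
      have : a ≤ v * a := by nlinarith
      split_ifs <;> linarith

lemma add_lt_one (h : ApproxPair α A B P Q a b) (hA : 1 ≤ A) (hB : 1 ≤ B) (hAB : 3 ≤ A + B) :
    a + b < 1 := by
  have e := h.mul_add_mul
  have ha := h.a_pos
  have hb := h.b_pos
  have hA' : (1 : ℝ) ≤ A := by exact_mod_cast hA
  have hB' : (1 : ℝ) ≤ B := by exact_mod_cast hB
  have hAB' : (3 : ℝ) ≤ A + B := by exact_mod_cast hAB
  rcases Nat.lt_or_ge 1 A with h' | h'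
  · have : (2 : ℝ) ≤ A := by exact_mod_cast h'
    nlinarith
  · have : (2 : ℝ) ≤ B := by
      have : 2 ≤ B := by omega
      exact_mod_cast this
    nlinarith

lemma exists_fract_eq_gapLen (h : ApproxPair α A B P Q a b) {n c : ℕ} (hA : 1 ≤ A) (hB : 1 ≤ B)
    (hn2 : 2 ≤ n) (hn : n < A + B) (hAn : A ≤ n) (hBn : B ≤ n) (hc : c ≤ n) :
    ∃ i ≤ n, i ≠ c ∧ Int.fract (((c - i : ℤ) : ℝ) * α) = gapLen A B n a b c := by
  have hab := h.add_lt_one hA hB (by omega)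
  have ha := h.a_pos
  have hb := h.b_pos
  have e1 := h.mul_A
  have e2 := h.mul_B
  unfold gapLen
  split_ifs with h1 h2
  · refine ⟨c - B, by omega, by omega, ?_⟩
    rw [Int.fract_eq_iff]
    refine ⟨by linarith, by linarith, Q, ?_⟩
    push_cast [h1]
    linear_combination e2
  · refine ⟨c + A, by omega, by omega, ?_⟩
    rw [Int.fract_eq_iff]
    refine ⟨by linarith, by linarith, -P, ?_⟩
    push_cast
    linear_combination -e1
  · have hne : A ≠ B := by
      rintro rfl
      have := h.det
      rw [← mul_sub] at this
      have := Int.isUnit_iff.1 (IsUnit.of_mul_eq_one _ this)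
      omega
    refine ⟨c + A - B, by omega, by omega, ?_⟩
    rw [Int.fract_eq_iff]
    refine ⟨by linarith, by linarith, Q - P, ?_⟩
    push_cast [show B ≤ c + A by omega]
    linear_combination e2 - e1

lemma wordAt_eq_wordAt_neg_iff (h : ApproxPair α A B P Q a b) (hirr : Irrational α) (h0 : 0 < α)
    (h1 : α < 1) {n c : ℕ} (hA : 1 ≤ A) (hB : 1 ≤ B)
    (hn2 : 2 ≤ n) (hn : n < A + B) (hAn : A ≤ n) (hBn : B ≤ n) (hc : c ≤ n) (m : ℤ) :
    wordAt (v0 α) m n = wordAt (v0 α) (-c) n ↔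
      Int.fract (((m + c : ℤ) : ℝ) * α) < gapLen A B n a b c := by
  have hneg {i : ℕ} (hi : i ≠ c) : Int.fract (((i - c : ℤ) : ℝ) * α) =
      1 - Int.fract (((c - i : ℤ) : ℝ) * α) := by
    rw [← fract_neg_intCast_mul hirr (by omega), neg_sub]
  rw [_root_.wordAt_eq_wordAt_neg_iff h0 h1 m hc]
  constructor
  · intro H
    obtain ⟨i, hi, hic, e⟩ := h.exists_fract_eq_gapLen hA hB hn2 hn hAn hBn hc
    have := H i hi
    rw [hneg hic] at this
    linarith
  · intro H i hi
    rcases eq_or_ne i c with rfl | hic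
    · simpa using Int.fract_lt_one (((m + i : ℤ) : ℝ) * α)
    · have := h.gapLen_le_fract hn hc hi hic
      rw [hneg hic]
      linarith

lemma injOn_wordAt_neg (h : ApproxPair α A B P Q a b) (hirr : Irrational α) (h0 : 0 < α)
    (h1 : α < 1) {n : ℕ} (hA : 1 ≤ A) (hB : 1 ≤ B)
    (hn2 : 2 ≤ n) (hn : n < A + B) (hAn : A ≤ n) (hBn : B ≤ n) :
    Set.InjOn (fun c : ℕ => wordAt (v0 α) (-c) n) (Set.Iic n) := by
  intro c hc i hi e
  by_contra hne
  have H := (h.wordAt_eq_wordAt_neg_iff hirr h0 h1 hA hB hn2 hn hAn hBn hc (-i)).1 e.symm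
  have := h.gapLen_le_fract hn hc hi (Ne.symm hne)
  rw [show (-i + c : ℤ) = c - i by ring] at H
  linarith

lemma hasFreq0 (h : ApproxPair α A B P Q a b) (hirr : Irrational α) (h0 : 0 < α)
    (h1 : α < 1) {n c : ℕ} (hA : 1 ≤ A) (hB : 1 ≤ B)
    (hn2 : 2 ≤ n) (hn : n < A + B) (hAn : A ≤ n) (hBn : B ≤ n) (hc : c ≤ n) :
    HasFreq0 α (wordAt (v0 α) (-c) n) (gapLen A B n a b c) := by
  obtain ⟨i, -, -, e⟩ := h.exists_fract_eq_gapLen hA hB hn2 hn hAn hBn hc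
  have := tendsto_card_fract_lt α c (c - i)
  rw [e] at this
  have hlen : (wordAt (v0 α) (-c) n).length = n := by simp [wordAt]
  simpa only [HasFreq0, hlen,
    h.wordAt_eq_wordAt_neg_iff hirr h0 h1 hA hB hn2 hn hAn hBn hc] using this

lemma hasFreq0_iff (h : ApproxPair α A B P Q a b) (hirr : Irrational α) (h0 : 0 < α)
    (h1 : α < 1) {n c : ℕ} (hA : 1 ≤ A) (hB : 1 ≤ B)
    (hn2 : 2 ≤ n) (hn : n < A + B) (hAn : A ≤ n) (hBn : B ≤ n) (hc : c ≤ n) {L : ℝ} :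
    HasFreq0 α (wordAt (v0 α) (-c) n) L ↔ gapLen A B n a b c = L :=
  ⟨fun H => tendsto_nhds_unique (h.hasFreq0 hirr h0 h1 hA hB hn2 hn hAn hBn hc) H,
    fun e => e ▸ h.hasFreq0 hirr h0 h1 hA hB hn2 hn hAn hBn hc⟩

lemma factor_iff (h : ApproxPair α A B P Q a b) (hirr : Irrational α) (h0 : 0 < α)
    (h1 : α < 1) {n : ℕ} (hA : 1 ≤ A) (hB : 1 ≤ B)
    (hn2 : 2 ≤ n) (hn : n < A + B) (hAn : A ≤ n) (hBn : B ≤ n) (w : List Bool) :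
    w.length = n ∧ IsFactor α w ↔ ∃ c ≤ n, wordAt (v0 α) (-(c : ℤ)) n = w := by
  constructor
  · rintro ⟨hw, m, hm⟩
    obtain ⟨c, hc, e⟩ := exists_wordAt_eq_neg h0 h1 (m + 1) n
    rw [hw] at hm
    exact ⟨c, hc, by rw [← e, hm]; rfl⟩
  · rintro ⟨c, hc, rfl⟩
    refine ⟨by simp [wordAt], ?_⟩
    obtain ⟨m, hm, e⟩ := (h.hasFreq0 hirr h0 h1 hA hB hn2 hn hAn hBn hc).exists_wordAt_eq
      (h.gapLen_pos n c)
    obtain ⟨m, rfl⟩ := Nat.exists_eq_add_of_le' hm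
    exact ⟨m, by rw [← e]; simp [wordAt, word]⟩

lemma occursIn_iff (h : ApproxPair α A B P Q a b) (hirr : Irrational α) (h0 : 0 < α)
    (h1 : α < 1) {n c : ℕ} (hA : 1 ≤ A) (hB : 1 ≤ B)
    (hn2 : 2 ≤ n) (hn : n < A + B) (hAn : A ≤ n) (hBn : B ≤ n) (hc : c ≤ n) :
    OccursIn α (wordAt (v0 α) (-c) n) (A + B - 2) ↔ n < c + A ∧ c < B := by
  have ha := h.a_pos
  have hb := h.b_pos
  have hlen : (wordAt (v0 α) (-c) n).length = n := by simp [wordAt]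
  have hword (m : ℕ) : wordAt (v0 α) (-c) n = word α m n ↔
      Int.fract (((m + 1 + c : ℤ) : ℝ) * α) < gapLen A B n a b c := by
    rw [← h.wordAt_eq_wordAt_neg_iff hirr h0 h1 hA hB hn2 hn hAn hBn hc, eq_comm]
    rfl
  simp only [OccursIn, hlen, hword]
  constructor
  · rintro ⟨m, hm, H⟩
    obtain ⟨u, v, hu, hv, hd, hf⟩ :=
      h.exists_coeffs (d := (m + 1 + c : ℤ)) (by rw [abs_lt]; omega)
    rw [hf] at H
    have hvr : (0 : ℝ) ≤ v := by exact_mod_cast hv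
    have hu1 : 0 < u := by
      by_contra! hu0
      nlinarith
    have hu1r : (1 : ℝ) ≤ u := by exact_mod_cast hu1
    unfold gapLen at H
    split_ifs at H with hB' hA'
    · nlinarith
    · rcases hv.eq_or_lt with rfl | hv1
      · have : (B : ℤ) ≤ u * B := by nlinarith
        omega
      · have hv1r : (1 : ℝ) ≤ v := by exact_mod_cast hv1
        nlinarith
    · omega
  · rintro ⟨hl, hr⟩
    refine ⟨B - c - 1, by omega, ?_⟩
    have hab := h.add_lt_one hA hB (by omega)
    have : ((B - c - 1 : ℕ) + 1 + c : ℤ) = B := by omega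
    rw [this]
    have : Int.fract (((B : ℤ) : ℝ) * α) = b := by
      rw [Int.fract_eq_iff]
      refine ⟨by linarith, by linarith, Q, ?_⟩
      push_cast
      linear_combination h.mul_B
    rw [this, gapLen, if_neg (by omega), if_neg (by omega)]
    linarith

lemma ncard_factors (h : ApproxPair α A B P Q a b) (hirr : Irrational α) (h0 : 0 < α)
    (h1 : α < 1) {n : ℕ} (hA : 1 ≤ A) (hB : 1 ≤ B)
    (hn2 : 2 ≤ n) (hn : n < A + B) (hAn : A ≤ n) (hBn : B ≤ n) (p : List Bool → Prop)
    (s : Finset ℕ) (hs : ∀ c, c ∈ s ↔ c ≤ n ∧ p (wordAt (v0 α) (-(c : ℤ)) n)) :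
    {w : List Bool | w.length = n ∧ IsFactor α w ∧ p w}.ncard = s.card := by
  have : {w : List Bool | w.length = n ∧ IsFactor α w ∧ p w} =
      Set.image (fun c : ℕ => wordAt (v0 α) (-c) n) s := by
    ext w
    simp only [Set.mem_ofPred_eq, Set.mem_image, Finset.mem_coe, hs, ← and_assoc,
      h.factor_iff hirr h0 h1 hA hB hn2 hn hAn hBn]
    constructor
    · rintro ⟨⟨c, hc, rfl⟩, hp⟩
      exact ⟨c, ⟨hc, hp⟩, rfl⟩
    · rintro ⟨c, ⟨hc, hp⟩, rfl⟩
      exact ⟨⟨c, hc, rfl⟩, hp⟩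
  have hinj : Set.InjOn (fun c : ℕ => wordAt (v0 α) (-c) n) s :=
    (h.injOn_wordAt_neg hirr h0 h1 hA hB hn2 hn hAn hBn).mono fun c hc => ((hs c).1 hc).1
  rw [this, hinj.ncard_image, Set.ncard_coe_finset]

/-- The distribution of the factors of length `n` among the three possible frequencies. -/
theorem frequencies (h : ApproxPair α A B P Q a b) (hirr : Irrational α) (h0 : 0 < α)
    (h1 : α < 1) {n : ℕ} (hA : 1 ≤ A) (hB : 1 ≤ B)
    (hn2 : 2 ≤ n) (hn : n < A + B) (hAn : A ≤ n) (hBn : B ≤ n) (hab : a ≠ b) :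
    (∀ w : List Bool, w.length = n → IsFactor α w →
        ∃ L : ℝ, HasFreq0 α w L ∧ (L = a + b ∨ L = a ∨ L = b)) ∧
    (∀ w : List Bool, w.length = n → IsFactor α w →
        (HasFreq0 α w (a + b) ↔ OccursIn α w (A + B - 2))) ∧
    {w : List Bool | w.length = n ∧ IsFactor α w ∧ OccursIn α w (A + B - 2)}.ncard
      = A + B - 1 - n ∧
    {w : List Bool | w.length = n ∧ IsFactor α w ∧ HasFreq0 α w a}.ncard = n + 1 - A ∧
    {w : List Bool | w.length = n ∧ IsFactor α w ∧ HasFreq0 α w b}.ncard = n + 1 - B := by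
  have ha := h.a_pos
  have hb := h.b_pos
  have hfac := h.factor_iff hirr h0 h1 hA hB hn2 hn hAn hBn
  have hfreq {c : ℕ} (hc : c ≤ n) {L : ℝ} :=
    h.hasFreq0_iff hirr h0 h1 hA hB hn2 hn hAn hBn hc (L := L)
  have hocc {c : ℕ} (hc : c ≤ n) := h.occursIn_iff hirr h0 h1 hA hB hn2 hn hAn hBn hc
  have hcard := h.ncard_factors hirr h0 h1 hA hB hn2 hn hAn hBn
  refine ⟨fun w hw hf => ?_, fun w hw hf => ?_, ?_, ?_, ?_⟩
  · obtain ⟨c, hc, rfl⟩ := (hfac w).1 ⟨hw, hf⟩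
    refine ⟨_, (hfreq hc).2 rfl, ?_⟩
    unfold gapLen
    split_ifs <;> simp
  · obtain ⟨c, hc, rfl⟩ := (hfac w).1 ⟨hw, hf⟩
    rw [hfreq hc, hocc hc, gapLen]
    split_ifs with hB' hA'
    · exact iff_of_false (by linarith) (by omega)
    · exact iff_of_false (by linarith) (by omega)
    · exact iff_of_true rfl (by omega)
  · rw [hcard _ (Finset.Ico (n + 1 - A) B), Nat.card_Ico]
    · omega
    · intro c
      rw [Finset.mem_Ico, and_congr_right hocc]
      omega
  · rw [hcard _ (Finset.range (n + 1 - A)), Finset.card_range]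
    intro c
    rw [Finset.mem_range, and_congr_right fun hc => hfreq hc, gapLen]
    split_ifs with hB' hA'
    · simp only [hab.symm, and_false, iff_false]
      omega
    · simp only [and_true]
      omega
    · simp only [add_eq_left, hb.ne', and_false, iff_false]
      omega
  · rw [hcard _ (Finset.Icc B n), Nat.card_Icc]
    intro c
    rw [Finset.mem_Icc, and_congr_right fun hc => hfreq hc, gapLen]
    split_ifs with hB' hA'
    · simp only [and_true]
      omega
    · simp only [hab, and_false, iff_false]
      omega
    · simp only [add_eq_right, ha.ne', and_false, iff_false]
      omega

end ApproxPair

/-! ### Convergents -/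

/-- `pn α (n+1)` is the convergent numerator `p_n`, with `pn α 0 = p_{-1} = 1`. -/
def pn (α : ℝ) : ℕ → ℤ
  | 0 => 1
  | 1 => 0
  | (n+2) => pq α n * pn α (n+1) + pn α n

/-- `errAbs α (n+1) = |q_n α - p_n|`. -/
def errAbs (α : ℝ) : ℕ → ℝ
  | 0 => 1
  | (n+1) => gaussMap^[n] α * errAbs α n

lemma gaussMap_iterate_mem {α : ℝ} (hirr : Irrational α) (h0 : 0 < α) (h1 : α < 1) (i : ℕ) :
    Irrational (gaussMap^[i] α) ∧ 0 < gaussMap^[i] α ∧ gaussMap^[i] α < 1 := by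
  induction i with
  | zero => exact ⟨hirr, h0, h1⟩
  | succ i ih =>
    rw [Function.iterate_succ_apply']
    obtain ⟨hi, -, -⟩ := ih
    have hirr' : Irrational (gaussMap (gaussMap^[i] α)) := hi.inv.sub_intCast _
    exact ⟨hirr', lt_of_le_of_ne (Int.fract_nonneg _) hirr'.ne_zero.symm, Int.fract_lt_one _⟩

lemma inv_gaussMap_iterate {α : ℝ} (hirr : Irrational α) (h0 : 0 < α) (h1 : α < 1) (i : ℕ) :
    (gaussMap^[i] α)⁻¹ = pq α i + gaussMap^[i + 1] α := by
  have hpos : 0 < (gaussMap^[i] α)⁻¹ := inv_pos.2 (gaussMap_iterate_mem hirr h0 h1 i).2.1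
  rw [Function.iterate_succ_apply', gaussMap, pq, natCast_floor_eq_intCast_floor hpos.le,
    Int.floor_add_fract]

lemma one_le_pq {α : ℝ} (hirr : Irrational α) (h0 : 0 < α) (h1 : α < 1) (i : ℕ) :
    1 ≤ pq α i := by
  obtain ⟨-, hp, hl⟩ := gaussMap_iterate_mem hirr h0 h1 i
  rw [pq, Nat.one_le_floor_iff]
  exact (one_lt_inv₀ hp).2 hl |>.le

lemma errAbs_pos {α : ℝ} (hirr : Irrational α) (h0 : 0 < α) (h1 : α < 1) (i : ℕ) :
    0 < errAbs α i := by
  induction i with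
  | zero => exact one_pos
  | succ i ih => exact mul_pos (gaussMap_iterate_mem hirr h0 h1 i).2.1 ih

lemma errAbs_eq {α : ℝ} (hirr : Irrational α) (h0 : 0 < α) (h1 : α < 1) (i : ℕ) :
    errAbs α i = (pq α i + gaussMap^[i + 1] α) * errAbs α (i + 1) := by
  rw [← inv_gaussMap_iterate hirr h0 h1, errAbs,
    inv_mul_cancel_left₀ (gaussMap_iterate_mem hirr h0 h1 i).2.1.ne']

lemma qd_mul_sub_pn {α : ℝ} (hirr : Irrational α) (h0 : 0 < α) (h1 : α < 1) (i : ℕ) :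
    (qd α i : ℝ) * α - pn α i = (-1) ^ (i + 1) * errAbs α i ∧
      (qd α (i + 1) : ℝ) * α - pn α (i + 1) = (-1) ^ (i + 2) * errAbs α (i + 1) := by
  induction i with
  | zero => simp [qd, pn, errAbs]
  | succ i ih =>
    refine ⟨ih.2, ?_⟩
    have e := errAbs_eq hirr h0 h1 i
    have e2 : errAbs α (i + 1 + 1) = gaussMap^[i + 1] α * errAbs α (i + 1) := rfl
    rw [show qd α (i + 1 + 1) = pq α i * qd α (i + 1) + qd α i from rfl,
      show pn α (i + 1 + 1) = pq α i * pn α (i + 1) + pn α i from rfl]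
    push_cast
    rw [e2]
    linear_combination ih.1 + (pq α i : ℝ) * ih.2 + (-1) ^ (i + 1) * e

lemma qd_mul_pn_sub (α : ℝ) (i : ℕ) :
    (qd α (i + 1) : ℤ) * pn α i - qd α i * pn α (i + 1) = (-1) ^ i := by
  induction i with
  | zero => simp [qd, pn]
  | succ i ih =>
    rw [show qd α (i + 1 + 1) = pq α i * qd α (i + 1) + qd α i from rfl,
      show pn α (i + 1 + 1) = pq α i * pn α (i + 1) + pn α i from rfl]
    push_cast
    linear_combination -ih

lemma qd_mul_errAbs_add {α : ℝ} (hirr : Irrational α) (h0 : 0 < α) (h1 : α < 1) (i : ℕ) :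
    qd α (i + 1) * errAbs α i + qd α i * errAbs α (i + 1) = 1 := by
  induction i with
  | zero => simp [qd, errAbs]
  | succ i ih =>
    have e := errAbs_eq hirr h0 h1 i
    have e2 : errAbs α (i + 1 + 1) = gaussMap^[i + 1] α * errAbs α (i + 1) := rfl
    rw [show qd α (i + 1 + 1) = pq α i * qd α (i + 1) + qd α i from rfl]
    push_cast
    rw [e2]
    linear_combination ih - (qd α (i + 1) : ℝ) * e

lemma one_le_qd_succ {α : ℝ} (hirr : Irrational α) (h0 : 0 < α) (h1 : α < 1) (i : ℕ) :
    1 ≤ qd α (i + 1) := by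
  induction i with
  | zero => simp [qd]
  | succ i ih => exact le_add_right (Nat.mul_le_mul (one_le_pq hirr h0 h1 i) ih)

lemma qd_le_qd_succ {α : ℝ} (hirr : Irrational α) (h0 : 0 < α) (h1 : α < 1) (i : ℕ) :
    qd α (i + 1) ≤ qd α (i + 2) :=
  le_add_right (Nat.le_mul_of_pos_left _ (one_le_pq hirr h0 h1 i))

lemma approxPair_of_even {α : ℝ} (hirr : Irrational α) (h0 : 0 < α) (h1 : α < 1) {k : ℕ}
    (hk : Even k) : ApproxPair α (qd α k) (qd α (k + 1)) (pn α k) (pn α (k + 1))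
      (errAbs α k) (errAbs α (k + 1)) := by
  obtain ⟨e1, e2⟩ := qd_mul_sub_pn hirr h0 h1 k
  have hd := qd_mul_pn_sub α k
  rw [pow_add, hk.neg_one_pow] at e1 e2
  rw [hk.neg_one_pow] at hd
  exact ⟨errAbs_pos hirr h0 h1 k, errAbs_pos hirr h0 h1 _, by linarith, by linarith, hd⟩

lemma approxPair_of_odd {α : ℝ} (hirr : Irrational α) (h0 : 0 < α) (h1 : α < 1) {k : ℕ}
    (hk : Odd k) : ApproxPair α (qd α (k + 1)) (qd α k) (pn α (k + 1)) (pn α k)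
      (errAbs α (k + 1)) (errAbs α k) := by
  obtain ⟨e1, e2⟩ := qd_mul_sub_pn hirr h0 h1 k
  have hd := qd_mul_pn_sub α k
  rw [pow_add, hk.neg_one_pow] at e1 e2
  rw [hk.neg_one_pow] at hd
  exact ⟨errAbs_pos hirr h0 h1 _, errAbs_pos hirr h0 h1 k, by linarith, by linarith, by linarith⟩

/-- For `n = q_k + j` (`k ≥ 1`, `0 ≤ j ≤ q_{k-1} - 1`, `n ≥ 2`), with
`β = β_k = 1/(1 + G^{k+1}(α))` and `D = β q_{k+1} + (1 - β) q_k`, every factor of `v₀` of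
length `n` has a well-defined frequency; the frequency equals `(β(a_{k+1}+1)+(1-β))/D`
exactly for the `q_{k-1} - 1 - j` factors occurring in
`(v₀(1), …, v₀(q_k + q_{k-1} - 2))`, equals `(β a_{k+1} + (1-β))/D` for exactly
`q_k - q_{k-1} + 1 + j` factors, and equals `β/D` for exactly `j + 1` factors.
(Here `qd α (k+1) = q_k`, `pq α k = a_{k+1}`.) -/
theorem factor_frequency (α : ℝ) (hirr : Irrational α) (h0 : 0 < α) (h1 : α < 1)
    (k j n : ℕ) (hk : 1 ≤ k) (hj : j ≤ qd α k - 1) (hn : n = qd α (k + 1) + j)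
    (hn2 : 2 ≤ n)
    (β D : ℝ) (hβ : β = (1 + gaussMap^[k + 1] α)⁻¹)
    (hD : D = β * (qd α (k + 2) : ℝ) + (1 - β) * (qd α (k + 1) : ℝ)) :
    (∀ w : List Bool, w.length = n → IsFactor α w →
        ∃ L : ℝ, HasFreq0 α w L ∧
          (L = (β * (pq α k + 1) + (1 - β)) / D ∨
           L = (β * (pq α k) + (1 - β)) / D ∨ L = β / D)) ∧
    (∀ w : List Bool, w.length = n → IsFactor α w →
        (HasFreq0 α w ((β * (pq α k + 1) + (1 - β)) / D) ↔
          OccursIn α w (qd α (k + 1) + qd α k - 2))) ∧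
    {w : List Bool | w.length = n ∧ IsFactor α w ∧
        OccursIn α w (qd α (k + 1) + qd α k - 2)}.ncard = qd α k - 1 - j ∧
    {w : List Bool | w.length = n ∧ IsFactor α w ∧
        HasFreq0 α w ((β * (pq α k) + (1 - β)) / D)}.ncard
      = qd α (k + 1) - qd α k + 1 + j ∧
    {w : List Bool | w.length = n ∧ IsFactor α w ∧ HasFreq0 α w (β / D)}.ncard
      = j + 1 := by
  obtain ⟨-, ht0, -⟩ := gaussMap_iterate_mem hirr h0 h1 (k + 1)
  obtain ⟨-, -, hk1⟩ := gaussMap_iterate_mem hirr h0 h1 k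
  have hE := errAbs_pos hirr h0 h1 k
  have hE' := errAbs_pos hirr h0 h1 (k + 1)
  have hlt : errAbs α (k + 1) < errAbs α k := mul_lt_of_lt_one_left hE hk1
  have hsum := qd_mul_errAbs_add hirr h0 h1 (k + 1)
  rw [show errAbs α (k + 1 + 1) = gaussMap^[k + 1] α * errAbs α (k + 1) from rfl] at hsum
  have hrec := errAbs_eq hirr h0 h1 k
  set t := gaussMap^[k + 1] α
  have hβ1 : β * (1 + t) = 1 := by
    rw [hβ]
    exact inv_mul_cancel₀ (by positivity)
  have hβD : β = errAbs α (k + 1) * D := by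
    rw [hD]
    linear_combination (-β) * hsum + (qd α (k + 1) : ℝ) * errAbs α (k + 1) * hβ1
  have hD0 : D ≠ 0 := by
    rintro rfl
    rw [mul_zero] at hβD
    rw [hβD, zero_mul] at hβ1
    exact zero_ne_one hβ1
  have short : β / D = errAbs α (k + 1) := by rw [div_eq_iff hD0, hβD]
  have middle : (β * pq α k + (1 - β)) / D = errAbs α k := by
    rw [div_eq_iff hD0]
    linear_combination (pq α k + t) * hβD - hβ1 - D * hrec
  have long : (β * (pq α k + 1) + (1 - β)) / D = errAbs α k + errAbs α (k + 1) := by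
    rw [← short, ← middle]
    ring
  rw [short, middle, long]
  obtain ⟨i, rfl⟩ := Nat.exists_eq_add_of_le' hk
  have hq1 := one_le_qd_succ hirr h0 h1 i
  have hq2 := qd_le_qd_succ hirr h0 h1 i
  change qd α (i + 1) ≤ qd α (i + 1 + 1) at hq2
  rcases Nat.even_or_odd (i + 1) with hpar | hpar
  · obtain ⟨p1, p2, p3, p4, p5⟩ := (approxPair_of_even hirr h0 h1 hpar).frequencies hirr h0 h1
      hq1 (by omega) hn2 (by omega) (by omega) (by omega) hlt.ne'
    rw [add_comm (qd α (i + 1))] at p2 p3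
    exact ⟨p1, p2, by omega, by omega, by omega⟩
  · obtain ⟨p1, p2, p3, p4, p5⟩ := (approxPair_of_odd hirr h0 h1 hpar).frequencies hirr h0 h1
      (by omega) hq1 hn2 (by omega) (by omega) (by omega) hlt.ne
    rw [add_comm (errAbs α (i + 1 + 1))] at p1 p2
    refine ⟨fun w hw hf => ?_, p2, by omega, by omega, by omega⟩
    obtain ⟨L, hL, hcases⟩ := p1 w hw hf
    exact ⟨L, hL, by tauto⟩

end
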